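/- Let L ∈ ℕ and let u, v be information structures in 𝒰(L), i.e. both players' signals lie in {0,…,L−1} almost surely. Then max over g ∈ 𝒢(L) of val(v,g) − val(u,g) equals min over q₁, q₂ ∈ 𝒬(L) of ‖q₁.u − v.q₂‖ (both attained), and consequently d(u,v) = max{ min_{q₁,q₂∈𝒬} ‖q₁.u − v.q₂‖ , min_{q₁,q₂∈𝒬} ‖u.q₁ − q₂.v‖ }. -/

import Mathlib

open scoped BigOperators ENNReal

namespace ValueDistance

/-- An information structure: a probability distribution on `K × ℕ × ℕ`
(state, signal of player 1, signal of player 2). -/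
abbrev InfoStruct (K : Type) := PMF (K × ℕ × ℕ)

/-- A behavior strategy / garbling : a map `ℕ → Δ(ℕ)`. -/
abbrev Garbling : Type := ℕ → PMF ℕ

variable {K : Type}

/-- `g` is a payoff function with action bound `L` : values in `[-1,1]`,
`g k i j = -1` when `i ≥ L`, and `g k i j = 1` when `i < L` and `j ≥ L`. -/
def IsPayoffL (L : ℕ) (g : K → ℕ → ℕ → ℝ) : Prop :=
  (∀ k i j, g k i j ∈ Set.Icc (-1 : ℝ) 1) ∧
  (∀ k i j, L ≤ i → g k i j = -1) ∧
  (∀ k i j, i < L → L ≤ j → g k i j = 1)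

/-- `g` belongs to the set `𝒢` of payoff functions. -/
def IsPayoff (g : K → ℕ → ℕ → ℝ) : Prop := ∃ L, IsPayoffL L g

/-- `g` belongs to the set `𝒢₁` of single-agent (player 1) problems. -/
def IsPayoff1 (g : K → ℕ → ℕ → ℝ) : Prop :=
  IsPayoff g ∧ ∀ k i j j', g k i j = g k i j'

/-- Expected payoff in the Bayesian game `Γ(u,g)` when player 1 uses the behavior
strategy `σ` and player 2 uses `τ`. -/
noncomputable def payoff (u : InfoStruct K) (g : K → ℕ → ℕ → ℝ)
    (σ τ : Garbling) : ℝ :=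
  ∑' (x : K × ℕ × ℕ) (i : ℕ) (j : ℕ),
    (u x).toReal * (σ x.2.1 i).toReal * (τ x.2.2 j).toReal * g x.1 i j

/-- The value `val(u,g)` of the zero-sum Bayesian game `Γ(u,g)`
(the common value of `sup inf` and `inf sup` of the expected payoff;
we take `sup inf` as the definition). -/
noncomputable def val (u : InfoStruct K) (g : K → ℕ → ℕ → ℝ) : ℝ :=
  ⨆ σ : Garbling, ⨅ τ : Garbling, payoff u g σ τ

/-- Total variation distance `‖u − v‖`. -/
noncomputable def tv {α : Type} (u v : PMF α) : ℝ :=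
  ∑' x : α, |(u x).toReal - (v x).toReal|

/-- `q.u` : player 1's signal garbled through `q`. -/
noncomputable def garbleLeft (q : Garbling) (u : InfoStruct K) : InfoStruct K :=
  u.bind (fun x => (q x.2.1).map (fun c => (x.1, c, x.2.2)))

/-- `u.q` : player 2's signal garbled through `q`. -/
noncomputable def garbleRight (u : InfoStruct K) (q : Garbling) : InfoStruct K :=
  u.bind (fun x => (q x.2.2).map (fun d => (x.1, x.2.1, d)))

/-- The value-based distance `d(u,v) = sup_{g ∈ 𝒢} |val(u,g) − val(v,g)|`. -/
noncomputable def dVal (u v : InfoStruct K) : ℝ :=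
  ⨆ g : {g : K → ℕ → ℕ → ℝ // IsPayoff g}, |val u g.1 - val v g.1|

/-- The single-agent distance `d₁(u,v) = sup_{g ∈ 𝒢₁} |val(u,g) − val(v,g)|`. -/
noncomputable def d1 (u v : InfoStruct K) : ℝ :=
  ⨆ g : {g : K → ℕ → ℕ → ℝ // IsPayoff1 g}, |val u g.1 - val v g.1|

/-- Marginal of an information structure on `K × ℕ` (state, player 1's signal). -/
noncomputable def marg1 (u : InfoStruct K) : PMF (K × ℕ) :=
  u.map (fun x => (x.1, x.2.1))

/-- Garbling of a single-agent information structure: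
`(q.w)(k,c) = Σ_s w(k,s)·q(s)({c})`. -/
noncomputable def garble1 (q : Garbling) (w : PMF (K × ℕ)) : PMF (K × ℕ) :=
  w.bind (fun x => (q x.2).map (fun c => (x.1, c)))

/-- Marginal of an information structure on the states. -/
noncomputable def margK (u : InfoStruct K) : PMF K := u.map Prod.fst

/-- Marginal of an information structure on `K × ℕ` (state, player 2's signal). -/
noncomputable def margKD (u : InfoStruct K) : PMF (K × ℕ) :=
  u.map (fun x => (x.1, x.2.2))

/-- `σ.q` : on signal `c`, draw `c'` according to `q(c)` and play `σ(c')`. -/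
noncomputable def compGarble (σ q : Garbling) : Garbling :=
  fun c => (q c).bind σ

/-- `u ∈ 𝒰(L)` : both players' signals are `< L` with probability 1. -/
def InU (L : ℕ) (u : InfoStruct K) : Prop :=
  ∀ x : K × ℕ × ℕ, u x ≠ 0 → x.2.1 < L ∧ x.2.2 < L

/-- `q ∈ 𝒬(L)` : garbling with values supported on `{0,…,L−1}`. -/
def GarblingIn (L : ℕ) (q : Garbling) : Prop :=
  ∀ n m, q n m ≠ 0 → m < L

/-- The two players' signals are conditionally independent given the state:
`u(k)·u(k,c,d) = u(k,c)·u(k,d)` for all `k, c, d`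
(equivalently `u(c,d|k) = u(c|k)·u(d|k)` whenever `u(k) > 0`). -/
def CondIndep (u : InfoStruct K) : Prop :=
  ∀ (k : K) (c d : ℕ),
    (∑' y : ℕ × ℕ, u (k, y)) * u (k, c, d)
      = (∑' d' : ℕ, u (k, c, d')) * (∑' c' : ℕ, u (k, c', d))

end ValueDistance

namespace ValueDistance

/-!
Garbling player 1's signal cannot help player 1, garbling player 2's signal cannot hurt player 1,
and values are 1-Lipschitz for total variation; hence `val v g - val u g ≤ ‖q₁.u - v.q₂‖` for all
`g ∈ 𝒢` and all garblings.

For the converse, `‖q₁.u - v.q₂‖` is the maximum over `g ∈ 𝒢(L)` of the payoff in `Γ(v, g)` when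
player 1 announces their signal and player 2 plays `q₂`, minus the payoff in `Γ(u, g)` when player 1
plays `q₁` and player 2 announces their signal. This difference is bilinear in `(q₁, q₂)` and `g`,
so Sion's theorem yields a saddle point. Announcing one's signal is just one strategy, and actions
outside `{0, …, L - 1}` are dominated, so the saddle payoff `g` has `val v g - val u g` at least the
saddle value.
-/

section Expectation

variable {α β : Type*} {C : ℝ}

/-- Expectation of a real function under a discrete probability distribution. It is `0` by
convention when the series is not summable, which never happens for bounded `f`. -/
noncomputable def expect (p : PMF α) (f : α → ℝ) : ℝ := ∑' x, (p x).toReal * f x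

theorem summable_toReal (p : PMF α) : Summable fun x => (p x).toReal :=
  ENNReal.summable_toReal p.tsum_coe_ne_top

theorem tsum_toReal (p : PMF α) : ∑' x, (p x).toReal = 1 := by
  rw [← ENNReal.tsum_toReal_eq p.apply_ne_top, p.tsum_coe, ENNReal.toReal_one]

theorem norm_toReal_mul_le (a : ℝ≥0∞) {r : ℝ} (hr : |r| ≤ C) : ‖a.toReal * r‖ ≤ a.toReal * C := by
  rw [norm_mul, Real.norm_of_nonneg ENNReal.toReal_nonneg]
  exact mul_le_mul_of_nonneg_left hr ENNReal.toReal_nonneg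

theorem summable_toReal_mul (p : PMF α) {f : α → ℝ} (hf : ∀ x, |f x| ≤ C) :
    Summable fun x => (p x).toReal * f x :=
  .of_norm_bounded ((summable_toReal p).mul_right C) fun x => norm_toReal_mul_le _ (hf x)

theorem abs_expect_le (p : PMF α) {f : α → ℝ} (hf : ∀ x, |f x| ≤ C) : |expect p f| ≤ C := by
  have hC : HasSum (fun x => (p x).toReal * C) C := by
    simpa only [tsum_toReal, one_mul] using (summable_toReal p).hasSum.mul_right C
  exact tsum_of_norm_bounded hC fun x => norm_toReal_mul_le _ (hf x)

theorem expect_mono {p : PMF α} {f g : α → ℝ} {D : ℝ} (hf : ∀ x, |f x| ≤ C) (hg : ∀ x, |g x| ≤ D)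
    (h : ∀ x, p x ≠ 0 → f x ≤ g x) : expect p f ≤ expect p g := by
  refine (summable_toReal_mul p hf).tsum_le_tsum (fun x => ?_) (summable_toReal_mul p hg)
  by_cases hx : p x = 0
  · simp [hx]
  · exact mul_le_mul_of_nonneg_left (h x hx) ENNReal.toReal_nonneg

theorem expect_const_mul (p : PMF α) (s : ℝ) (f : α → ℝ) :
    expect p (fun x => s * f x) = s * expect p f := by
  simp only [expect, mul_left_comm _ s, tsum_mul_left]

theorem expect_add (p : PMF α) {f g : α → ℝ} {D : ℝ} (hf : ∀ x, |f x| ≤ C)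
    (hg : ∀ x, |g x| ≤ D) : expect p (fun x => f x + g x) = expect p f + expect p g := by
  simp only [expect, mul_add]
  exact (summable_toReal_mul p hf).tsum_add (summable_toReal_mul p hg)

theorem expect_linear_comb (p : PMF α) {f g : α → ℝ} (hf : ∀ x, |f x| ≤ C) (hg : ∀ x, |g x| ≤ C)
    (s t : ℝ) : expect p (fun x => s * f x + t * g x) = s * expect p f + t * expect p g := by
  have bound (r : ℝ) {h : α → ℝ} (hh : ∀ x, |h x| ≤ C) (x : α) : |r * h x| ≤ |r| * C := by
    rw [abs_mul]
    exact mul_le_mul_of_nonneg_left (hh x) (abs_nonneg r)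
  rw [expect_add p (bound s hf) (bound t hg), expect_const_mul, expect_const_mul]

theorem continuousOn_expect {X : Type*} [TopologicalSpace X] {S : Set X} (p : PMF α)
    {f : X → α → ℝ} (hf : ∀ a, ContinuousOn (fun x => f x a) S) (hC : ∀ x ∈ S, ∀ a, |f x a| ≤ C) :
    ContinuousOn (fun x => expect p (f x)) S :=
  continuousOn_tsum (fun a => continuousOn_const.mul (hf a)) ((summable_toReal p).mul_right C)
    fun a x hx => norm_toReal_mul_le _ (hC x hx a)

theorem summable_toReal_mul_toReal_mul (p : PMF α) (w : α → PMF β) {f : α → β → ℝ}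
    (hf : ∀ x y, |f x y| ≤ C) :
    Summable (Function.uncurry fun x y => (p x).toReal * ((w x y).toReal * f x y)) := by
  have hpw : Summable fun z : α × β => (p z.1 * w z.1 z.2).toReal := by
    apply ENNReal.summable_toReal
    simp [ENNReal.tsum_prod (f := fun x y => p x * w x y), ENNReal.tsum_mul_left]
  refine .of_norm_bounded (hpw.mul_right C) fun (x, y) => ?_
  rw [Function.uncurry_apply_pair, ← mul_assoc, ← ENNReal.toReal_mul]
  exact norm_toReal_mul_le _ (hf _ _)

theorem expect_bind (p : PMF α) (w : α → PMF β) {f : β → ℝ} (hf : ∀ y, |f y| ≤ C) :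
    expect (p.bind w) f = expect p fun x => expect (w x) f := by
  simp only [expect, ← tsum_mul_left]
  rw [← (summable_toReal_mul_toReal_mul p w fun _ => hf).tsum_comm]
  refine tsum_congr fun y => ?_
  rw [PMF.bind_apply, ENNReal.tsum_toReal_eq fun x =>
    ENNReal.mul_ne_top (p.apply_ne_top x) ((w x).apply_ne_top y), ← tsum_mul_right]
  simp only [ENNReal.toReal_mul, mul_assoc]

theorem expect_pure (a : α) (f : α → ℝ) : expect (PMF.pure a) f = f a := by
  rw [expect, tsum_eq_single a fun b hb => by simp [hb]]
  simp

theorem expect_map (p : PMF α) (h : α → β) {f : β → ℝ} (hf : ∀ y, |f y| ≤ C) :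
    expect (p.map h) f = expect p fun x => f (h x) := by
  simp only [← PMF.bind_pure_comp, expect_bind _ _ hf, Function.comp_apply, expect_pure]

theorem expect_comm (p : PMF α) (q : PMF β) {f : α → β → ℝ} (hf : ∀ x y, |f x y| ≤ C) :
    expect p (fun x => expect q (f x)) = expect q fun y => expect p fun x => f x y := by
  simp only [expect, ← tsum_mul_left]
  rw [← (summable_toReal_mul_toReal_mul p (fun _ => q) hf).tsum_comm]
  simp only [mul_left_comm]

end Expectation

section TotalVariation

variable {α : Type}

theorem tv_comm (p q : PMF α) : tv p q = tv q p := by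
  simp only [tv, abs_sub_comm]

theorem expect_sub_expect_le_tv (p q : PMF α) {f : α → ℝ} {C : ℝ} (hf : ∀ x, |f x| ≤ C) :
    expect q f - expect p f ≤ C * tv p q := by
  have hq := summable_toReal_mul q hf
  have hp := summable_toReal_mul p hf
  rw [expect, expect, tv, ← hq.tsum_sub hp, ← tsum_mul_left]
  refine (hq.sub hp).tsum_le_tsum (fun x => ?_)
    (((summable_toReal p).sub (summable_toReal q)).abs.mul_left C)
  calc (q x).toReal * f x - (p x).toReal * f x
      = f x * ((q x).toReal - (p x).toReal) := by ring
    _ ≤ |f x| * |(q x).toReal - (p x).toReal| := by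
      rw [← abs_mul]
      exact le_abs_self _
    _ ≤ C * |(p x).toReal - (q x).toReal| := by
      rw [abs_sub_comm]
      exact mul_le_mul_of_nonneg_right (hf x) (abs_nonneg _)

end TotalVariation

section PayoffFunction

variable {K : Type} {L : ℕ}

theorem IsPayoffL.abs_le_one {g : K → ℕ → ℕ → ℝ} (hg : IsPayoffL L g) (k : K) (i j : ℕ) :
    |g k i j| ≤ 1 :=
  abs_le.2 (hg.1 k i j)

/-- The least element of `𝒢(L)` for the pointwise order. The set `𝒢(L)` is the order interval from
`minPayoff K L` to `maxPayoff K L`. -/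
def minPayoff (K : Type) (L : ℕ) : K → ℕ → ℕ → ℝ := fun _ i j => if i < L ∧ L ≤ j then 1 else -1

/-- The greatest element of `𝒢(L)` for the pointwise order. -/
def maxPayoff (K : Type) (L : ℕ) : K → ℕ → ℕ → ℝ := fun _ i _ => if i < L then 1 else -1

theorem setOf_isPayoffL_eq_Icc :
    {g : K → ℕ → ℕ → ℝ | IsPayoffL L g} = Set.Icc (minPayoff K L) (maxPayoff K L) := by
  ext g
  refine ⟨fun ⟨hI, h_neg, h_one⟩ => ⟨fun k i j => ?_, fun k i j => ?_⟩, fun ⟨h_min, h_max⟩ => ?_⟩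
  · rw [minPayoff]
    split_ifs with h
    · exact (h_one k i j h.1 h.2).ge
    · exact (hI k i j).1
  · rw [maxPayoff]
    split_ifs with h
    · exact (hI k i j).2
    · exact (h_neg k i j (not_lt.1 h)).le
  · have h_lower k i j : (if i < L ∧ L ≤ j then (1 : ℝ) else -1) ≤ g k i j := h_min k i j
    have h_upper k i j : g k i j ≤ if i < L then (1 : ℝ) else -1 := h_max k i j
    refine ⟨fun k i j => ?_, fun k i j hi => ?_, fun k i j hi hj => ?_⟩ <;>
      have := h_lower k i j <;> have := h_upper k i j <;> grind

theorem minPayoff_le_maxPayoff : minPayoff K L ≤ maxPayoff K L := by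
  intro k i j
  unfold minPayoff maxPayoff
  grind

theorem IsPayoffL.le_apply_truncate {g : K → ℕ → ℕ → ℝ} (hg : IsPayoffL L g) (k : K) (i j : ℕ) :
    g k i j ≤ g k (if i < L then i else 0) j := by
  split_ifs with hi
  · exact le_rfl
  · rw [hg.2.1 k i j (not_lt.1 hi)]
    exact (hg.1 k 0 j).1

theorem IsPayoffL.apply_truncate_le {g : K → ℕ → ℕ → ℝ} (hg : IsPayoffL L g) (k : K) {i : ℕ}
    (hi : i < L) (j : ℕ) : g k i (if j < L then j else 0) ≤ g k i j := by
  split_ifs with hj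
  · exact le_rfl
  · rw [hg.2.2 k i j hi (not_lt.1 hj)]
    exact (hg.1 k i 0).2

end PayoffFunction

section Payoff

variable {K : Type} {g : K → ℕ → ℕ → ℝ} {C : ℝ}

theorem payoff_eq_expect (u : InfoStruct K) (g : K → ℕ → ℕ → ℝ) (σ τ : Garbling) :
    payoff u g σ τ = expect u fun x => expect (σ x.2.1) fun i => expect (τ x.2.2) (g x.1 i) := by
  simp only [payoff, expect, ← tsum_mul_left, mul_assoc]

theorem payoff_pure_left (u : InfoStruct K) (g : K → ℕ → ℕ → ℝ) (τ : Garbling) :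
    payoff u g PMF.pure τ = expect u fun x => expect (τ x.2.2) (g x.1 x.2.1) := by
  simp only [payoff_eq_expect, expect_pure]

theorem payoff_pure_right (u : InfoStruct K) (g : K → ℕ → ℕ → ℝ) (σ : Garbling) :
    payoff u g σ PMF.pure = expect u fun x => expect (σ x.2.1) fun i => g x.1 i x.2.2 := by
  simp only [payoff_eq_expect, expect_pure]

theorem abs_expect_expect_le (hg : ∀ k i j, |g k i j| ≤ C) (σ τ : Garbling) (x : K × ℕ × ℕ) :
    |expect (σ x.2.1) fun i => expect (τ x.2.2) (g x.1 i)| ≤ C :=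
  abs_expect_le _ fun i => abs_expect_le _ (hg x.1 i)

theorem abs_payoff_le (u : InfoStruct K) (hg : ∀ k i j, |g k i j| ≤ C) (σ τ : Garbling) :
    |payoff u g σ τ| ≤ C := by
  rw [payoff_eq_expect]
  exact abs_expect_le _ (abs_expect_expect_le hg σ τ)

theorem payoff_sub_payoff_le_tv (u v : InfoStruct K) (hg : ∀ k i j, |g k i j| ≤ C)
    (σ τ : Garbling) : payoff v g σ τ - payoff u g σ τ ≤ C * tv u v := by
  rw [payoff_eq_expect, payoff_eq_expect]
  exact expect_sub_expect_le_tv u v (abs_expect_expect_le hg σ τ)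

theorem payoff_garbleLeft (q : Garbling) (u : InfoStruct K) (hg : ∀ k i j, |g k i j| ≤ C)
    (σ τ : Garbling) : payoff (garbleLeft q u) g σ τ = payoff u g (compGarble σ q) τ := by
  simp only [payoff_eq_expect, garbleLeft, compGarble,
    expect_bind _ _ (abs_expect_expect_le hg σ τ), expect_map _ _ (abs_expect_expect_le hg σ τ),
    expect_bind _ _ fun i => abs_expect_le _ (hg _ i)]

theorem payoff_garbleRight (u : InfoStruct K) (q : Garbling) (hg : ∀ k i j, |g k i j| ≤ C)
    (σ τ : Garbling) : payoff (garbleRight u q) g σ τ = payoff u g σ (compGarble τ q) := by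
  simp only [payoff_eq_expect, garbleRight, compGarble,
    expect_bind _ _ (abs_expect_expect_le hg σ τ), expect_map _ _ (abs_expect_expect_le hg σ τ),
    expect_bind _ _ (hg _ _)]
  congr 1 with x
  exact expect_comm _ _ fun d i => abs_expect_le _ (hg x.1 i)

theorem compGarble_pure_left (q : Garbling) : compGarble PMF.pure q = q :=
  funext fun c => (q c).bind_pure

end Payoff

section Value

variable {K : Type} {g : K → ℕ → ℕ → ℝ} {C : ℝ}

theorem bddBelow_range_payoff (u : InfoStruct K) (hg : ∀ k i j, |g k i j| ≤ C) (σ : Garbling) :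
    BddBelow (Set.range fun τ => payoff u g σ τ) :=
  ⟨-C, Set.forall_mem_range.2 fun τ => (abs_le.1 (abs_payoff_le u hg σ τ)).1⟩

theorem iInf_payoff_le (u : InfoStruct K) (hg : ∀ k i j, |g k i j| ≤ C) (σ τ : Garbling) :
    ⨅ τ, payoff u g σ τ ≤ payoff u g σ τ :=
  ciInf_le (bddBelow_range_payoff u hg σ) τ

theorem iInf_payoff_le_val (u : InfoStruct K) (hg : ∀ k i j, |g k i j| ≤ C) (σ : Garbling) :
    ⨅ τ, payoff u g σ τ ≤ val u g := by
  refine le_ciSup (f := fun σ => ⨅ τ, payoff u g σ τ) ⟨C, Set.forall_mem_range.2 fun σ => ?_⟩ σ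
  exact (iInf_payoff_le u hg σ PMF.pure).trans (abs_le.1 (abs_payoff_le u hg σ _)).2

theorem le_val_of_forall_le_payoff {u : InfoStruct K} (hg : ∀ k i j, |g k i j| ≤ C) {M : ℝ}
    (σ : Garbling) (h : ∀ τ, M ≤ payoff u g σ τ) : M ≤ val u g :=
  (le_ciInf h).trans (iInf_payoff_le_val u hg σ)

theorem val_le_of_forall_payoff_le {u : InfoStruct K} (hg : ∀ k i j, |g k i j| ≤ C) {M : ℝ}
    (τ : Garbling) (h : ∀ σ, payoff u g σ τ ≤ M) : val u g ≤ M :=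
  ciSup_le fun σ => (iInf_payoff_le u hg σ τ).trans (h σ)

theorem val_garbleLeft_le (q : Garbling) (u : InfoStruct K) (hg : ∀ k i j, |g k i j| ≤ C) :
    val (garbleLeft q u) g ≤ val u g := by
  refine ciSup_le fun σ => ?_
  simp only [payoff_garbleLeft q u hg]
  exact iInf_payoff_le_val u hg (compGarble σ q)

theorem val_le_val_garbleRight (u : InfoStruct K) (q : Garbling) (hg : ∀ k i j, |g k i j| ≤ C) :
    val u g ≤ val (garbleRight u q) g := by
  refine ciSup_le fun σ => le_val_of_forall_le_payoff hg σ fun τ => ?_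
  rw [payoff_garbleRight u q hg]
  exact iInf_payoff_le u hg σ (compGarble τ q)

theorem val_sub_val_le_tv (u v : InfoStruct K) (hg : ∀ k i j, |g k i j| ≤ C) :
    val v g - val u g ≤ C * tv u v := by
  rw [sub_le_iff_le_add']
  refine ciSup_le fun σ => ?_
  rw [← sub_le_iff_le_add]
  refine le_val_of_forall_le_payoff hg σ fun τ => ?_
  linarith [iInf_payoff_le v hg σ τ, payoff_sub_payoff_le_tv u v hg σ τ]

theorem IsPayoffL.val_sub_val_le_tv_garble {L : ℕ} (hg : IsPayoffL L g) (u v : InfoStruct K)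
    (q₁ q₂ : Garbling) : val v g - val u g ≤ tv (garbleLeft q₁ u) (garbleRight v q₂) := by
  have h_left := val_garbleLeft_le q₁ u hg.abs_le_one
  have h_right := val_le_val_garbleRight v q₂ hg.abs_le_one
  have h_tv := val_sub_val_le_tv (garbleLeft q₁ u) (garbleRight v q₂) hg.abs_le_one
  linarith

end Value

section Truncation

variable {K : Type} {L : ℕ} {g : K → ℕ → ℕ → ℝ}

/-- The strategy `σ` with every action outside `{0, …, L - 1}` replaced by `0`. -/
noncomputable def truncate (L : ℕ) (σ : Garbling) : Garbling :=
  fun c => (σ c).map fun i => if i < L then i else 0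

theorem garblingIn_truncate (hL : 0 < L) (σ : Garbling) : GarblingIn L (truncate L σ) := by
  intro c m hm
  obtain ⟨i, -, rfl⟩ := (PMF.mem_support_map_iff _ _ _).1 ((PMF.mem_support_iff _ _).2 hm)
  split_ifs with hi
  exacts [hi, hL]

theorem payoff_le_payoff_truncate_left (hg : IsPayoffL L g) (u : InfoStruct K) (σ τ : Garbling) :
    payoff u g σ τ ≤ payoff u g (truncate L σ) τ := by
  rw [payoff_eq_expect, payoff_eq_expect]
  refine expect_mono (abs_expect_expect_le hg.abs_le_one σ τ)
    (abs_expect_expect_le hg.abs_le_one _ τ) fun x _ => ?_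
  rw [truncate, expect_map _ _ fun i => abs_expect_le _ (hg.abs_le_one x.1 i)]
  refine expect_mono (fun i => abs_expect_le _ (hg.abs_le_one x.1 i))
    (fun i => abs_expect_le _ (hg.abs_le_one x.1 _)) fun i _ => ?_
  exact expect_mono (hg.abs_le_one _ _) (hg.abs_le_one _ _) fun j _ => hg.le_apply_truncate x.1 i j

theorem payoff_truncate_right_le (hg : IsPayoffL L g) {u : InfoStruct K} {σ : Garbling}
    (hσ : ∀ x, u x ≠ 0 → ∀ i, σ x.2.1 i ≠ 0 → i < L) (τ : Garbling) :
    payoff u g σ (truncate L τ) ≤ payoff u g σ τ := by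
  rw [payoff_eq_expect, payoff_eq_expect]
  refine expect_mono (abs_expect_expect_le hg.abs_le_one σ _)
    (abs_expect_expect_le hg.abs_le_one σ τ) fun x hx => ?_
  refine expect_mono (fun i => abs_expect_le _ (hg.abs_le_one x.1 i))
    (fun i => abs_expect_le _ (hg.abs_le_one x.1 i)) fun i hi => ?_
  rw [truncate, expect_map _ _ (hg.abs_le_one x.1 i)]
  exact expect_mono (fun j => hg.abs_le_one _ _ _) (hg.abs_le_one _ _) fun j _ =>
    hg.apply_truncate_le x.1 (hσ x hx i hi) j

end Truncation

section Weights

variable {L : ℕ}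

/-- The matrix of transition probabilities to `{0, …, L - 1}` of a garbling. This embeds `𝒬(L)` in
a real vector space, where Sion's theorem applies. -/
noncomputable def weights (L : ℕ) (q : Garbling) : ℕ → Fin L → ℝ := fun c i => (q c i).toReal

/-- The image of `𝒬(L)` under `weights`. -/
def stochasticWeights (L : ℕ) : Set (ℕ → Fin L → ℝ) := Set.univ.pi fun _ => stdSimplex ℝ (Fin L)

theorem expect_eq_weights_dotProduct {q : Garbling} (hq : GarblingIn L q) (c : ℕ) (f : ℕ → ℝ) :
    expect (q c) f = weights L q c ⬝ᵥ fun i => f i := by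
  rw [expect, tsum_eq_sum (s := Finset.range L), Finset.sum_range]
  · rfl
  · intro m hm
    rw [not_imp_comm.1 (hq c m) (by simpa using hm), ENNReal.toReal_zero, zero_mul]

theorem weights_mem_stochasticWeights {q : Garbling} (hq : GarblingIn L q) :
    weights L q ∈ stochasticWeights L := by
  refine fun c _ => ⟨fun i => ENNReal.toReal_nonneg, ?_⟩
  have h_one := expect_eq_weights_dotProduct hq c fun _ => 1
  simpa [expect, tsum_toReal, dotProduct] using h_one.symm

theorem exists_garblingIn_weights_eq {a : ℕ → Fin L → ℝ} (ha : a ∈ stochasticWeights L) :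
    ∃ q, GarblingIn L q ∧ weights L q = a := by
  have h_sum c : ∑ i, ENNReal.ofReal (a c i) = 1 := by
    rw [← ENNReal.ofReal_sum_of_nonneg fun i _ => (ha c trivial).1 i, (ha c trivial).2,
      ENNReal.ofReal_one]
  refine ⟨fun c => (PMF.ofFintype _ (h_sum c)).map Fin.val, fun c m hm => ?_, ?_⟩
  · obtain ⟨i, -, rfl⟩ := (PMF.mem_support_map_iff _ _ _).1 ((PMF.mem_support_iff _ _).2 hm)
    exact i.isLt
  · ext c i
    have h_map : (PMF.ofFintype _ (h_sum c)).map Fin.val i = ENNReal.ofReal (a c i) := by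
      simp only [PMF.map_apply, Fin.val_inj, tsum_ite_eq', PMF.ofFintype_apply]
    rw [weights, h_map, ENNReal.toReal_ofReal ((ha c trivial).1 i)]

theorem convex_stochasticWeights : Convex ℝ (stochasticWeights L) :=
  convex_pi fun _ _ => convex_stdSimplex ℝ _

theorem isCompact_stochasticWeights : IsCompact (stochasticWeights L) :=
  isCompact_univ_pi fun _ => isCompact_stdSimplex ℝ _

theorem stochasticWeights_nonempty (hL : 0 < L) : (stochasticWeights L).Nonempty :=
  ⟨_, weights_mem_stochasticWeights (garblingIn_truncate hL PMF.pure)⟩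

theorem abs_dotProduct_le_of_mem_stochasticWeights {a : ℕ → Fin L → ℝ}
    (ha : a ∈ stochasticWeights L) (c : ℕ) {f : Fin L → ℝ} {C : ℝ} (hf : ∀ i, |f i| ≤ C) :
    |a c ⬝ᵥ f| ≤ C :=
  abs_le.2 <| (convex_Icc (-C) C).sum_mem (fun i _ => (ha c trivial).1 i) (ha c trivial).2
    fun i _ => abs_le.1 (hf i)

end Weights

section Minimax

variable {K : Type} {L : ℕ}

/-- The payoff in `Γ(v, g)` when player 1 announces their signal and player 2 plays the weights
`w.2`, minus the payoff in `Γ(u, g)` when player 1 plays the weights `w.1` and player 2 announces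
their signal. -/
noncomputable def payoffGap (u v : InfoStruct K) (w : (ℕ → Fin L → ℝ) × (ℕ → Fin L → ℝ))
    (g : K → ℕ → ℕ → ℝ) : ℝ :=
  expect v (fun x => w.2 x.2.2 ⬝ᵥ fun j => g x.1 x.2.1 j) -
    expect u (fun x => w.1 x.2.1 ⬝ᵥ fun i => g x.1 i x.2.2)

theorem payoffGap_weights {q₁ q₂ : Garbling} (hq₁ : GarblingIn L q₁) (hq₂ : GarblingIn L q₂)
    (u v : InfoStruct K) (g : K → ℕ → ℕ → ℝ) :
    payoffGap u v (weights L q₁, weights L q₂) g =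
      payoff v g PMF.pure q₂ - payoff u g q₁ PMF.pure := by
  simp only [payoffGap, payoff_pure_left, payoff_pure_right, expect_eq_weights_dotProduct hq₁,
    expect_eq_weights_dotProduct hq₂]

theorem continuousOn_payoffGap (u v : InfoStruct K) :
    ContinuousOn (Function.uncurry (payoffGap (L := L) u v))
      ((stochasticWeights L ×ˢ stochasticWeights L) ×ˢ {g | IsPayoffL L g}) := by
  refine .sub (continuousOn_expect (C := 1) v ?_ ?_) (continuousOn_expect (C := 1) u ?_ ?_)
  · exact fun x => by fun_prop
  · exact fun p hp x => abs_dotProduct_le_of_mem_stochasticWeights hp.1.2 _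
      fun j => hp.2.abs_le_one _ _ _
  · exact fun x => by fun_prop
  · exact fun p hp x => abs_dotProduct_le_of_mem_stochasticWeights hp.1.1 _
      fun i => hp.2.abs_le_one _ _ _

theorem payoffGap_linear_comb_left (u v : InfoStruct K) {g : K → ℕ → ℕ → ℝ} {C : ℝ}
    (hg : ∀ k i j, |g k i j| ≤ C) {w w' : (ℕ → Fin L → ℝ) × (ℕ → Fin L → ℝ)}
    (hw : w ∈ stochasticWeights L ×ˢ stochasticWeights L)
    (hw' : w' ∈ stochasticWeights L ×ˢ stochasticWeights L) (s t : ℝ) :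
    payoffGap u v (s • w + t • w') g = s * payoffGap u v w g + t * payoffGap u v w' g := by
  simp only [payoffGap, Prod.fst_add, Prod.snd_add, Prod.smul_fst, Prod.smul_snd, Pi.add_apply,
    Pi.smul_apply, add_dotProduct, smul_dotProduct, smul_eq_mul]
  rw [expect_linear_comb v (fun x => abs_dotProduct_le_of_mem_stochasticWeights hw.2 _
        fun j => hg _ _ j)
      (fun x => abs_dotProduct_le_of_mem_stochasticWeights hw'.2 _
        fun j => hg _ _ j),
    expect_linear_comb u (fun x => abs_dotProduct_le_of_mem_stochasticWeights hw.1 _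
        fun i => hg _ i _)
      (fun x => abs_dotProduct_le_of_mem_stochasticWeights hw'.1 _
        fun i => hg _ i _)]
  ring

theorem payoffGap_linear_comb_right (u v : InfoStruct K) {g g' : K → ℕ → ℕ → ℝ} {C : ℝ}
    (hg : ∀ k i j, |g k i j| ≤ C) (hg' : ∀ k i j, |g' k i j| ≤ C)
    {w : (ℕ → Fin L → ℝ) × (ℕ → Fin L → ℝ)}
    (hw : w ∈ stochasticWeights L ×ˢ stochasticWeights L) (s t : ℝ) :
    payoffGap u v w (s • g + t • g') = s * payoffGap u v w g + t * payoffGap u v w g' := by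
  have h_dot (a f f' : Fin L → ℝ) :
      (a ⬝ᵥ fun i => s * f i + t * f' i) = s * (a ⬝ᵥ f) + t * (a ⬝ᵥ f') := by
    rw [← smul_eq_mul, ← smul_eq_mul, ← dotProduct_smul, ← dotProduct_smul, ← dotProduct_add]
    rfl
  simp only [payoffGap, Pi.add_apply, Pi.smul_apply, smul_eq_mul, h_dot]
  rw [expect_linear_comb v (fun x => abs_dotProduct_le_of_mem_stochasticWeights hw.2 _
        fun j => hg _ _ j)
      (fun x => abs_dotProduct_le_of_mem_stochasticWeights hw.2 _
        fun j => hg' _ _ j),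
    expect_linear_comb u (fun x => abs_dotProduct_le_of_mem_stochasticWeights hw.1 _
        fun i => hg _ i _)
      (fun x => abs_dotProduct_le_of_mem_stochasticWeights hw.1 _
        fun i => hg' _ i _)]
  ring

theorem exists_isSaddlePointOn_payoffGap (hL : 0 < L) (u v : InfoStruct K) :
    ∃ w ∈ stochasticWeights L ×ˢ stochasticWeights L, ∃ g ∈ {g | IsPayoffL L g},
      IsSaddlePointOn (stochasticWeights L ×ˢ stochasticWeights L) {g | IsPayoffL L g}
        (payoffGap u v) w g := by
  have h_cont := continuousOn_payoffGap (L := L) u v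
  have h_convex : Convex ℝ (stochasticWeights L ×ˢ stochasticWeights L) :=
    convex_stochasticWeights.prod convex_stochasticWeights
  have h_convex' : Convex ℝ {g : K → ℕ → ℕ → ℝ | IsPayoffL L g} :=
    setOf_isPayoffL_eq_Icc ▸ convex_Icc _ _
  refine Sion.exists_isSaddlePointOn
    ((stochasticWeights_nonempty hL).prod (stochasticWeights_nonempty hL)) h_convex
    (isCompact_stochasticWeights.prod isCompact_stochasticWeights)
    (fun g hg => (h_cont.uncurry_right g hg).lowerSemicontinuousOn)
    (fun g hg => ConvexOn.quasiconvexOn ⟨h_convex, fun w hw w' hw' s t _ _ _ => ?_⟩) h_convex'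
    (setOf_isPayoffL_eq_Icc ▸ Set.nonempty_Icc.2 minPayoff_le_maxPayoff)
    (setOf_isPayoffL_eq_Icc ▸ isCompact_Icc)
    (fun w hw => (h_cont.uncurry_left w hw).upperSemicontinuousOn)
    (fun w hw => ConcaveOn.quasiconcaveOn ⟨h_convex', fun g hg g' hg' s t _ _ _ => ?_⟩)
  · exact (payoffGap_linear_comb_left u v hg.abs_le_one hw hw' s t).le
  · exact (payoffGap_linear_comb_right u v hg.abs_le_one hg'.abs_le_one hw s t).ge

theorem exists_saddle_garblings (hL : 0 < L) (u v : InfoStruct K) :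
    ∃ q₁ q₂ : Garbling, GarblingIn L q₁ ∧ GarblingIn L q₂ ∧ ∃ g₀, IsPayoffL L g₀ ∧
      ∀ q₁' q₂' : Garbling, GarblingIn L q₁' → GarblingIn L q₂' → ∀ g, IsPayoffL L g →
        payoff v g PMF.pure q₂ - payoff u g q₁ PMF.pure ≤
          payoff v g₀ PMF.pure q₂' - payoff u g₀ q₁' PMF.pure := by
  obtain ⟨⟨a, b⟩, ⟨ha, hb⟩, g₀, hg₀, h_saddle⟩ := exists_isSaddlePointOn_payoffGap hL u v
  obtain ⟨q₁, hq₁, rfl⟩ := exists_garblingIn_weights_eq ha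
  obtain ⟨q₂, hq₂, rfl⟩ := exists_garblingIn_weights_eq hb
  refine ⟨q₁, q₂, hq₁, hq₂, g₀, hg₀, fun q₁' q₂' hq₁' hq₂' g hg => ?_⟩
  rw [← payoffGap_weights hq₁ hq₂, ← payoffGap_weights hq₁' hq₂']
  exact h_saddle _ ⟨weights_mem_stochasticWeights hq₁', weights_mem_stochasticWeights hq₂'⟩ g hg

end Minimax

section Distance

variable {K : Type} {L : ℕ} {u v : InfoStruct K}

theorem inU_garbleLeft {q : Garbling} (hq : GarblingIn L q) (hu : ∀ x, u x ≠ 0 → x.2.2 < L) :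
    InU L (garbleLeft q u) := by
  intro y hy
  rw [← PMF.mem_support_iff, garbleLeft, PMF.mem_support_bind_iff] at hy
  obtain ⟨x, hx, hxy⟩ := hy
  obtain ⟨c, hc, rfl⟩ := (PMF.mem_support_map_iff _ _ _).1 hxy
  exact ⟨hq _ c hc, hu x hx⟩

theorem inU_garbleRight {q : Garbling} (hq : GarblingIn L q) (hu : ∀ x, u x ≠ 0 → x.2.1 < L) :
    InU L (garbleRight u q) := by
  intro y hy
  rw [← PMF.mem_support_iff, garbleRight, PMF.mem_support_bind_iff] at hy
  obtain ⟨x, hx, hxy⟩ := hy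
  obtain ⟨d, hd, rfl⟩ := (PMF.mem_support_map_iff _ _ _).1 hxy
  exact ⟨hu x hx, hq _ d hd⟩

theorem exists_isPayoffL_payoff_sub_eq_tv (hu : InU L u) (hv : InU L v) :
    ∃ g, IsPayoffL L g ∧
      payoff v g PMF.pure PMF.pure - payoff u g PMF.pure PMF.pure = tv u v := by
  let g : K → ℕ → ℕ → ℝ := fun k i j =>
    if i < L then if j < L ∧ (v (k, i, j)).toReal < (u (k, i, j)).toReal then -1 else 1 else -1
  have hg : IsPayoffL L g := by
    refine ⟨fun k i j => ?_, fun k i j hi => if_neg hi.not_gt, fun k i j hi hj => ?_⟩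
    · dsimp only [g]
      split_ifs <;> norm_num
    · simp only [g, if_pos hi, hj.not_gt, false_and, if_false]
  refine ⟨g, hg, ?_⟩
  have h_bound (x : K × ℕ × ℕ) : |g x.1 x.2.1 x.2.2| ≤ 1 := hg.abs_le_one _ _ _
  simp only [payoff_pure_left, expect_pure]
  rw [expect, expect, tv,
    ← (summable_toReal_mul v h_bound).tsum_sub (summable_toReal_mul u h_bound)]
  refine tsum_congr fun x => ?_
  by_cases hx : x.2.1 < L ∧ x.2.2 < L
  · rcases lt_or_ge (v x).toReal (u x).toReal with h | h
    · rw [abs_of_pos (sub_pos.2 h)]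
      simp only [g, hx.1, hx.2, h, and_self, if_true]
      ring
    · rw [abs_of_nonpos (sub_nonpos.2 h)]
      simp only [g, hx.1, h.not_gt, and_false, if_true, if_false]
      ring
  · simp [not_imp_comm.1 (hu x) hx, not_imp_comm.1 (hv x) hx]

theorem exists_isPayoffL_val_sub_eq_tv (hu : ∀ x, u x ≠ 0 → x.2.2 < L)
    (hv : ∀ x, v x ≠ 0 → x.2.1 < L) :
    ∃ g, IsPayoffL L g ∧ ∃ q₁ q₂, GarblingIn L q₁ ∧ GarblingIn L q₂ ∧
      val v g - val u g = tv (garbleLeft q₁ u) (garbleRight v q₂) := by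
  have hL : 0 < L := by
    obtain ⟨x, hx⟩ := v.support_nonempty
    exact Nat.zero_lt_of_lt (hv x hx)
  obtain ⟨q₁, q₂, hq₁, hq₂, g₀, hg₀, h_saddle⟩ := exists_saddle_garblings hL u v
  refine ⟨g₀, hg₀, q₁, q₂, hq₁, hq₂, (hg₀.val_sub_val_le_tv_garble u v q₁ q₂).antisymm ?_⟩
  obtain ⟨g, hg, h_tv⟩ :=
    exists_isPayoffL_payoff_sub_eq_tv (inU_garbleLeft hq₁ hu) (inU_garbleRight hq₂ hv)
  rw [payoff_garbleRight _ _ hg.abs_le_one, payoff_garbleLeft _ _ hg.abs_le_one,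
    compGarble_pure_left, compGarble_pure_left] at h_tv
  have hv_pure : ∀ x, v x ≠ 0 → ∀ i, PMF.pure x.2.1 i ≠ 0 → i < L := by
    intro x hx i hi
    obtain rfl := (PMF.mem_support_pure_iff _ _).1 hi
    exact hv x hx
  suffices val u g₀ ≤ val v g₀ - tv (garbleLeft q₁ u) (garbleRight v q₂) by linarith
  refine val_le_of_forall_payoff_le hg₀.abs_le_one PMF.pure fun σ => ?_
  rw [le_sub_iff_add_le]
  refine le_val_of_forall_le_payoff hg₀.abs_le_one PMF.pure fun τ => ?_
  have h_trunc := h_saddle _ _ (garblingIn_truncate hL σ) (garblingIn_truncate hL τ) g hg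
  linarith [payoff_le_payoff_truncate_left hg₀ u σ PMF.pure, payoff_truncate_right_le hg₀ hv_pure τ]

theorem dVal_eq_max_tv {g₀ g₁ : K → ℕ → ℕ → ℝ} (hg₀ : IsPayoff g₀) (hg₁ : IsPayoff g₁)
    {a₁ a₂ b₁ b₂ : Garbling}
    (h₀ : val v g₀ - val u g₀ = tv (garbleLeft a₁ u) (garbleRight v a₂))
    (h₁ : val u g₁ - val v g₁ = tv (garbleRight u b₁) (garbleLeft b₂ v)) :
    dVal u v = max (tv (garbleLeft a₁ u) (garbleRight v a₂))
      (tv (garbleRight u b₁) (garbleLeft b₂ v)) := by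
  have h_le (g : {g : K → ℕ → ℕ → ℝ // IsPayoff g}) : |val u g - val v g| ≤
      max (tv (garbleLeft a₁ u) (garbleRight v a₂)) (tv (garbleRight u b₁) (garbleLeft b₂ v)) := by
    obtain ⟨g, L, hg⟩ := g
    refine abs_sub_le_iff.2 ⟨le_max_of_le_right ?_, le_max_of_le_left ?_⟩
    · rw [tv_comm]
      exact hg.val_sub_val_le_tv_garble v u b₂ b₁
    · exact hg.val_sub_val_le_tv_garble u v a₁ a₂
  have h_bdd : BddAbove (Set.range fun g : {g : K → ℕ → ℕ → ℝ // IsPayoff g} =>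
      |val u g - val v g|) := ⟨_, Set.forall_mem_range.2 h_le⟩
  have : Nonempty {g : K → ℕ → ℕ → ℝ // IsPayoff g} := ⟨⟨g₀, hg₀⟩⟩
  refine (ciSup_le h_le).antisymm (max_le ?_ ?_)
  · rw [← h₀]
    exact ((le_abs_self _).trans_eq (abs_sub_comm _ _)).trans (le_ciSup h_bdd ⟨g₀, hg₀⟩)
  · rw [← h₁]
    exact (le_abs_self _).trans (le_ciSup h_bdd ⟨g₁, hg₁⟩)

theorem val_dist_characterization_L_general (hu : InU L u) (hv : InU L v) :
    (∃ g₀ : K → ℕ → ℕ → ℝ, IsPayoffL L g₀ ∧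
      ∃ q₁ q₂ : Garbling, GarblingIn L q₁ ∧ GarblingIn L q₂ ∧
        (∀ g : K → ℕ → ℕ → ℝ, IsPayoffL L g →
          val v g - val u g ≤ val v g₀ - val u g₀) ∧
        (∀ q₁' q₂' : Garbling, GarblingIn L q₁' → GarblingIn L q₂' →
          tv (garbleLeft q₁ u) (garbleRight v q₂)
            ≤ tv (garbleLeft q₁' u) (garbleRight v q₂')) ∧
        val v g₀ - val u g₀ = tv (garbleLeft q₁ u) (garbleRight v q₂)) ∧
    (∃ a₁ a₂ b₁ b₂ : Garbling,
      (∀ q₁' q₂' : Garbling,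
        tv (garbleLeft a₁ u) (garbleRight v a₂)
          ≤ tv (garbleLeft q₁' u) (garbleRight v q₂')) ∧
      (∀ q₁' q₂' : Garbling,
        tv (garbleRight u b₁) (garbleLeft b₂ v)
          ≤ tv (garbleRight u q₁') (garbleLeft q₂' v)) ∧
      dVal u v = max (tv (garbleLeft a₁ u) (garbleRight v a₂))
                     (tv (garbleRight u b₁) (garbleLeft b₂ v))) := by
  obtain ⟨g₀, hg₀, q₁, q₂, hq₁, hq₂, h₀⟩ :=
    exists_isPayoffL_val_sub_eq_tv (fun x hx => (hu x hx).2) fun x hx => (hv x hx).1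
  obtain ⟨g₁, hg₁, r₁, r₂, -, -, h₁⟩ :=
    exists_isPayoffL_val_sub_eq_tv (fun x hx => (hv x hx).2) fun x hx => (hu x hx).1
  have h_min (q₁' q₂' : Garbling) :
      tv (garbleLeft q₁ u) (garbleRight v q₂) ≤ tv (garbleLeft q₁' u) (garbleRight v q₂') :=
    h₀.ge.trans (hg₀.val_sub_val_le_tv_garble u v q₁' q₂')
  rw [tv_comm] at h₁
  refine ⟨⟨g₀, hg₀, q₁, q₂, hq₁, hq₂, fun g hg => ?_, fun q₁' q₂' _ _ => h_min q₁' q₂', h₀⟩,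
    q₁, q₂, r₂, r₁, h_min, fun q₁' q₂' => ?_, dVal_eq_max_tv ⟨L, hg₀⟩ ⟨L, hg₁⟩ h₀ h₁⟩
  · exact h₀ ▸ hg.val_sub_val_le_tv_garble u v q₁ q₂
  · rw [← h₁, tv_comm]
    exact hg₁.val_sub_val_le_tv_garble v u q₂' q₁'

end Distance

/-- Theorem 1 (second part): for `u, v ∈ 𝒰(L)`, the optima in the
characterization are attained by `L`-based games and garblings, and
`d(u,v) = max{ min_{q₁,q₂∈𝒬} ‖q₁.u − v.q₂‖ , min_{q₁,q₂∈𝒬} ‖u.q₁ − q₂.v‖ }`. -/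
theorem val_dist_characterization_L (K : Type) [Fintype K]
    (hK : 2 ≤ Fintype.card K) (L : ℕ) (u v : InfoStruct K)
    (hu : InU L u) (hv : InU L v) :
    (∃ g₀ : K → ℕ → ℕ → ℝ, IsPayoffL L g₀ ∧
      ∃ q₁ q₂ : Garbling, GarblingIn L q₁ ∧ GarblingIn L q₂ ∧
        (∀ g : K → ℕ → ℕ → ℝ, IsPayoffL L g →
          val v g - val u g ≤ val v g₀ - val u g₀) ∧
        (∀ q₁' q₂' : Garbling, GarblingIn L q₁' → GarblingIn L q₂' →
          tv (garbleLeft q₁ u) (garbleRight v q₂)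
            ≤ tv (garbleLeft q₁' u) (garbleRight v q₂')) ∧
        val v g₀ - val u g₀ = tv (garbleLeft q₁ u) (garbleRight v q₂)) ∧
    (∃ a₁ a₂ b₁ b₂ : Garbling,
      (∀ q₁' q₂' : Garbling,
        tv (garbleLeft a₁ u) (garbleRight v a₂)
          ≤ tv (garbleLeft q₁' u) (garbleRight v q₂')) ∧
      (∀ q₁' q₂' : Garbling,
        tv (garbleRight u b₁) (garbleLeft b₂ v)
          ≤ tv (garbleRight u q₁') (garbleLeft q₂' v)) ∧
      dVal u v = max (tv (garbleLeft a₁ u) (garbleRight v a₂))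
                     (tv (garbleRight u b₁) (garbleLeft b₂ v))) := by
  exact val_dist_characterization_L_general hu hv

end ValueDistance
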